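/- arXiv:2603.16696 — 3 statements merged into one kernel-verified Lean document; each statement's English description precedes it below -/
import Mathlib

section
/- With the elliptic data below, ∫_{η₁⁻¹}^{η₁} ds / √((η₁ − s)(s − η₁⁻¹)(η₂ − s)(s − η₂⁻¹)) = (√((1 − l₁²)(1 − l₂²)) / l₂) · K(k). -/
/-- Complete elliptic integral of the first kind:
`K(k) = ∫₀¹ ds/√((1−s²)(1−k²s²))`. -/
noncomputable def ellK (k : ℝ) : ℝ :=
  ∫ s in (0 : ℝ)..1, 1 / Real.sqrt ((1 - s ^ 2) * (1 - k ^ 2 * s ^ 2))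

/-- `l(x) = (x−1)/(x+1)`. -/
noncomputable def lpar (x : ℝ) : ℝ := (x - 1) / (x + 1)

/-!
The substitution `s = (1 + x) / (1 - x)` inverts `lpar` and turns `s ↦ s⁻¹` into `x ↦ -x`, so it
carries the four branch points `η₁^{±1}, η₂^{±1}` to `±l₁, ±l₂`. The integral becomes an even one,
`√((1 - l₁²)(1 - l₂²)) / 2 * ∫ x in -l₁..l₁, 1 / √((l₁² - x²)(l₂² - x²))`, and the scaling
`x = l₁ t` brings its half over `[0, l₁]` to Legendre's form with modulus `l₁ / l₂`.
-/

open Set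

theorem intervalIntegral_neg_self_of_even {E : Type*} [NormedAddCommGroup E] [NormedSpace ℝ E]
    {f : ℝ → E} (hf : f.Even) (a : ℝ) :
    ∫ x in -a..a, f x = (2 : ℝ) • ∫ x in 0..a, f x := by
  have reflect : ∫ x in -a..0, f x = ∫ x in 0..a, f x := by
    simpa only [hf _, neg_zero] using (intervalIntegral.integral_comp_neg (a := 0) (b := a) f).symm
  by_cases hint : IntervalIntegrable f MeasureTheory.volume 0 a
  · have hint' : IntervalIntegrable f MeasureTheory.volume (-a) 0 := by
      simpa only [hf _, neg_zero] using (IntervalIntegrable.iff_comp_neg (f := f) |>.mp hint).symm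
    rw [← intervalIntegral.integral_add_adjacent_intervals hint' hint, reflect, two_smul]
  · have hint' : ¬IntervalIntegrable f MeasureTheory.volume (-a) a := fun h ↦
      hint <| h.mono_set <| uIcc_subset_uIcc_right <| by
        rcases le_total 0 a with ha | ha
        · exact mem_uIcc_of_le (neg_nonpos.mpr ha) ha
        · exact mem_uIcc_of_ge ha (neg_nonneg.mpr ha)
    rw [intervalIntegral.integral_undef hint, intervalIntegral.integral_undef hint', smul_zero]

theorem integral_one_div_sqrt_eq_ellK {a b : ℝ} (ha : 0 < a) (hb : 0 < b) :
    ∫ x in 0..a, 1 / √((a ^ 2 - x ^ 2) * (b ^ 2 - x ^ 2)) = ellK (a / b) / b := by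
  have scaled (t : ℝ) : 1 / √((a ^ 2 - (a * t) ^ 2) * (b ^ 2 - (a * t) ^ 2)) =
      (a * b)⁻¹ * (1 / √((1 - t ^ 2) * (1 - (a / b) ^ 2 * t ^ 2))) := by
    have factor : (a ^ 2 - (a * t) ^ 2) * (b ^ 2 - (a * t) ^ 2) =
        (a * b) ^ 2 * ((1 - t ^ 2) * (1 - (a / b) ^ 2 * t ^ 2)) := by
      field_simp
    rw [factor, Real.sqrt_mul (sq_nonneg _), Real.sqrt_sq (by positivity), one_div, mul_inv,
      one_div]
  calc ∫ x in 0..a, 1 / √((a ^ 2 - x ^ 2) * (b ^ 2 - x ^ 2))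
      = a * ∫ t in 0..1, 1 / √((a ^ 2 - (a * t) ^ 2) * (b ^ 2 - (a * t) ^ 2)) := by
        rw [intervalIntegral.mul_integral_comp_mul_left
          (f := fun x ↦ 1 / √((a ^ 2 - x ^ 2) * (b ^ 2 - x ^ 2))), mul_zero, mul_one]
    _ = a * ((a * b)⁻¹ * ellK (a / b)) := by
        simp only [scaled, intervalIntegral.integral_const_mul, ellK]
    _ = ellK (a / b) / b := by field_simp

/-- The Möbius map `x ↦ (1 + x) / (1 - x)` inverse to `lpar`, used as the change of variables
`s = lparInv x`; it takes the junk value `0` at its pole `x = 1`. -/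
noncomputable def lparInv (x : ℝ) : ℝ := (1 + x) / (1 - x)

theorem lparInv_lpar {x : ℝ} (hx : x ≠ -1) : lparInv (lpar x) = x := by
  have : x + 1 ≠ 0 := by rwa [Ne, add_eq_zero_iff_eq_neg]
  unfold lparInv lpar
  field_simp
  ring

theorem lpar_pos {x : ℝ} (hx : 1 < x) : 0 < lpar x :=
  div_pos (by linarith) (by linarith)

theorem abs_lpar_lt_one {x : ℝ} (hx : 0 < x) : |lpar x| < 1 := by
  have hx' : 0 < x + 1 := by linarith
  rw [lpar, abs_div, abs_of_pos hx', div_lt_one hx', abs_lt]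
  constructor <;> linarith

theorem lparInv_neg (x : ℝ) : lparInv (-x) = (lparInv x)⁻¹ := by
  simp only [lparInv, inv_div, sub_neg_eq_add, ← sub_eq_add_neg]

theorem lparInv_sub_lparInv {x y : ℝ} (hx : x ≠ 1) (hy : y ≠ 1) :
    lparInv x - lparInv y = 2 * (x - y) / ((1 - x) * (1 - y)) := by
  have := sub_ne_zero.mpr hx.symm
  have := sub_ne_zero.mpr hy.symm
  unfold lparInv
  field_simp
  ring

theorem lparInv_sub_mul_sub_inv {a x : ℝ} (ha : a ≠ 1) (ha' : a ≠ -1)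
    (hx : x ≠ 1) :
    (lparInv a - lparInv x) * (lparInv x - (lparInv a)⁻¹) =
      (2 / (1 - x)) ^ 2 * (a ^ 2 - x ^ 2) / (1 - a ^ 2) := by
  have hneg : -a ≠ 1 := fun h ↦ ha' (neg_eq_iff_eq_neg.mp h)
  rw [← lparInv_neg, lparInv_sub_lparInv ha hx, lparInv_sub_lparInv hx hneg, div_mul_div_comm,
    div_pow, div_mul_eq_mul_div, div_div]
  congr 1 <;> ring

theorem hasDerivAt_lparInv {x : ℝ} (hx : x ≠ 1) :
    HasDerivAt lparInv (2 / (1 - x) ^ 2) x := by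
  have quotient := ((hasDerivAt_id x).const_add 1).fun_div ((hasDerivAt_id x).const_sub 1)
    (sub_ne_zero.mpr hx.symm)
  exact quotient.congr_deriv (by simp only [id_eq]; ring)

theorem integral_comp_lparInv_mul (g : ℝ → ℝ) {p q : ℝ} (hp : p < 1) (hq : q < 1) :
    ∫ x in p..q, g (lparInv x) * (2 / (1 - x) ^ 2) = ∫ s in lparInv p..lparInv q, g s := by
  have deriv_at {x : ℝ} (hx : x ∈ uIcc p q) : HasDerivAt lparInv (2 / (1 - x) ^ 2) x :=
    hasDerivAt_lparInv (hx.2.trans_lt (max_lt hp hq)).ne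
  exact intervalIntegral.integral_comp_mul_deriv_of_deriv_nonneg
    (fun x hx ↦ (deriv_at hx).continuousAt.continuousWithinAt)
    (fun x hx ↦ deriv_at (Ioo_subset_Icc_self hx)) (fun x _ ↦ by positivity)

theorem one_div_sqrt_lparInv_mul_deriv {a b x : ℝ} (ha : |a| < 1) (hb : |b| < 1) (hx : x ≠ 1) :
    1 / √((lparInv a - lparInv x) * (lparInv x - (lparInv a)⁻¹) *
        (lparInv b - lparInv x) * (lparInv x - (lparInv b)⁻¹)) * (2 / (1 - x) ^ 2) =
      √((1 - a ^ 2) * (1 - b ^ 2)) / 2 * (1 / √((a ^ 2 - x ^ 2) * (b ^ 2 - x ^ 2))) := by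
  have hx' : 1 - x ≠ 0 := sub_ne_zero.mpr hx.symm
  have hC : 0 ≤ (1 - a ^ 2) * (1 - b ^ 2) :=
    mul_nonneg (sub_nonneg.mpr ((sq_lt_one_iff_abs_lt_one a).mpr ha).le)
      (sub_nonneg.mpr ((sq_lt_one_iff_abs_lt_one b).mpr hb).le)
  have radicand : (lparInv a - lparInv x) * (lparInv x - (lparInv a)⁻¹) *
      (lparInv b - lparInv x) * (lparInv x - (lparInv b)⁻¹) =
      (4 / (1 - x) ^ 2) ^ 2 * ((a ^ 2 - x ^ 2) * (b ^ 2 - x ^ 2)) /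
        ((1 - a ^ 2) * (1 - b ^ 2)) := by
    obtain ⟨ha_gt, ha_lt⟩ := abs_lt.mp ha
    obtain ⟨hb_gt, hb_lt⟩ := abs_lt.mp hb
    rw [mul_assoc (_ * _), lparInv_sub_mul_sub_inv ha_lt.ne ha_gt.ne' hx,
      lparInv_sub_mul_sub_inv hb_lt.ne hb_gt.ne' hx, div_mul_div_comm]
    field_simp
    ring
  rw [radicand, Real.sqrt_div' _ hC, Real.sqrt_mul (sq_nonneg _), Real.sqrt_sq (by positivity)]
  field_simp
  ring

/- STATEMENT 11: With 1 < η₁ < η₂, l₁ = (η₁−1)/(η₁+1), l₂ = (η₂−1)/(η₂+1),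
k = l₁/l₂, one has
∫_{η₁⁻¹}^{η₁} ds / √((η₁ − s)(s − η₁⁻¹)(η₂ − s)(s − η₂⁻¹))
  = (√((1 − l₁²)(1 − l₂²)) / l₂) · K(k). -/
theorem stmt11 (η₁ η₂ : ℝ) (h1 : 1 < η₁) (h2 : η₁ < η₂) :
    (∫ s in η₁⁻¹..η₁,
        1 / Real.sqrt ((η₁ - s) * (s - η₁⁻¹) * (η₂ - s) * (s - η₂⁻¹))) =
      Real.sqrt ((1 - lpar η₁ ^ 2) * (1 - lpar η₂ ^ 2)) / lpar η₂ *
        ellK (lpar η₁ / lpar η₂) := by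
  set a := lpar η₁
  set b := lpar η₂
  have hη₁ : lparInv a = η₁ := lparInv_lpar (by linarith)
  have hη₂ : lparInv b = η₂ := lparInv_lpar (by linarith)
  have ha : 0 < a := lpar_pos h1
  have hb : 0 < b := lpar_pos (h1.trans h2)
  have ha_abs : |a| < 1 := abs_lpar_lt_one (by linarith)
  have hb_abs : |b| < 1 := abs_lpar_lt_one (by linarith)
  have ha1 : a < 1 := (abs_lt.mp ha_abs).2
  have even : (fun x : ℝ ↦ 1 / √((a ^ 2 - x ^ 2) * (b ^ 2 - x ^ 2))).Even :=
    fun x ↦ by simp only [neg_sq]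
  rw [← hη₁, ← hη₂, ← lparInv_neg a, ← integral_comp_lparInv_mul _ (by linarith) ha1]
  simp only [lparInv_neg]
  calc _ = ∫ x in -a..a, √((1 - a ^ 2) * (1 - b ^ 2)) / 2 *
          (1 / √((a ^ 2 - x ^ 2) * (b ^ 2 - x ^ 2))) :=
        intervalIntegral.integral_congr fun x hx ↦
          one_div_sqrt_lparInv_mul_deriv ha_abs hb_abs (hx.2.trans_lt (max_lt (by linarith) ha1)).ne
    _ = √((1 - a ^ 2) * (1 - b ^ 2)) / b * ellK (a / b) := by
        rw [intervalIntegral.integral_const_mul, intervalIntegral_neg_self_of_even even,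
          integral_one_div_sqrt_eq_ellK ha hb, smul_eq_mul]
        ring
end

section
/- With the elliptic data below, ∫_{η₁}^{η₂} ds / √((s − η₁)(η₂ − s)(s − η₁⁻¹)(s − η₂⁻¹)) = (√((1 − l₁²)(1 − l₂²)) / (2 l₂)) · K(√(1 − k²)). -/
/-
The Cayley map `u = lpar s` sends the four branch points `η₁, η₂, η₁⁻¹, η₂⁻¹` to the symmetric
quadruple `l₁, l₂, -l₁, -l₂`, so it turns the integrand into `1 / √((u² - l₁²) (l₂² - u²))` up to a
constant. Putting `κ² = 1 - (l₁ / l₂)²`, the substitution `u = l₂ √(1 - κ² t²)`, which is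
`u = l₂ dn` with `t = sn` in Jacobi's notation, then brings the integral over `[l₁, l₂]` to
Legendre form.
-/

open Set
open scoped Interval

section Cayley

variable {s x y : ℝ}

lemma one_sub_lpar_sq (hx : x + 1 ≠ 0) : 1 - lpar x ^ 2 = 4 * x / (x + 1) ^ 2 := by
  unfold lpar
  field_simp
  ring

lemma lpar_sq_sub_lpar_sq (hs : s + 1 ≠ 0) (hx : x + 1 ≠ 0) (hx₀ : x ≠ 0) :
    lpar s ^ 2 - lpar x ^ 2 = (1 - lpar x ^ 2) * ((s - x) * (s - x⁻¹) / (s + 1) ^ 2) := by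
  rw [one_sub_lpar_sq hx]
  unfold lpar
  field_simp
  ring

lemma lpar_pos_iff : 0 < lpar x ↔ 1 < x ∨ x < -1 := by
  rw [lpar, div_pos_iff, sub_pos, sub_neg]
  constructor <;> rintro (h | h)
  · exact Or.inl h.1
  · exact Or.inr (by linarith)
  · exact Or.inl ⟨h, by linarith⟩
  · exact Or.inr ⟨by linarith, by linarith⟩

lemma lpar_lt_lpar (hside : 0 < (x + 1) * (y + 1)) (hxy : x < y) : lpar x < lpar y := by
  have hx : x + 1 ≠ 0 := left_ne_zero_of_mul hside.ne'
  have hy : y + 1 ≠ 0 := right_ne_zero_of_mul hside.ne'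
  have hdiff : lpar y - lpar x = 2 * (y - x) / ((x + 1) * (y + 1)) := by
    unfold lpar
    field_simp
    ring
  rw [← sub_pos, hdiff]
  exact div_pos (mul_pos two_pos (sub_pos.2 hxy)) hside

lemma hasDerivAt_lpar (hs : s + 1 ≠ 0) : HasDerivAt lpar (2 / (s + 1) ^ 2) s :=
  (((hasDerivAt_id' s).sub_const 1).div ((hasDerivAt_id' s).add_const 1) hs).congr_deriv (by ring)

lemma integral_deriv_smul_comp_lpar {E : Type*} [NormedAddCommGroup E] [NormedSpace ℝ E]
    (g : ℝ → E) (hxy : -1 ∉ [[x, y]]) :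
    ∫ s in x..y, (2 / (s + 1) ^ 2) • g (lpar s) = ∫ u in lpar x..lpar y, g u := by
  have hne : ∀ s ∈ [[x, y]], s + 1 ≠ 0 := fun s hs h =>
    hxy (eq_neg_of_add_eq_zero_left h ▸ hs)
  exact intervalIntegral.integral_deriv_smul_comp_of_deriv_nonneg
    (fun s hs => (hasDerivAt_lpar (hne s hs)).continuousAt.continuousWithinAt)
    (fun s hs => hasDerivAt_lpar (hne s (Ioo_subset_Icc_self hs)))
    (fun s _ => by positivity)

lemma one_div_sqrt_reciprocal_quartic (hxy : 0 < x * y) (hs : s + 1 ≠ 0)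
    (hx : x + 1 ≠ 0) (hy : y + 1 ≠ 0) :
    1 / √((s - x) * (y - s) * (s - x⁻¹) * (s - y⁻¹)) =
      √((1 - lpar x ^ 2) * (1 - lpar y ^ 2)) / 2 *
        (2 / (s + 1) ^ 2 *
          (1 / √((lpar s ^ 2 - lpar x ^ 2) * (lpar y ^ 2 - lpar s ^ 2)))) := by
  set Q := (s - x) * (y - s) * (s - x⁻¹) * (s - y⁻¹) with hQ
  set P := (1 - lpar x ^ 2) * (1 - lpar y ^ 2) with hP
  have hP_pos : 0 < P := by
    rw [hP, one_sub_lpar_sq hx, one_sub_lpar_sq hy, div_mul_div_comm]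
    have : 0 < 4 * x * (4 * y) := by linarith
    positivity
  have hquartic :
      (lpar s ^ 2 - lpar x ^ 2) * (lpar y ^ 2 - lpar s ^ 2) = P * Q / ((s + 1) ^ 2) ^ 2 := by
    rw [← neg_sub (lpar s ^ 2) (lpar y ^ 2),
      lpar_sq_sub_lpar_sq hs hx (left_ne_zero_of_mul hxy.ne'),
      lpar_sq_sub_lpar_sq hs hy (right_ne_zero_of_mul hxy.ne'), hP, hQ]
    field_simp
    ring
  have hsqrtP : √P ≠ 0 := (Real.sqrt_pos.2 hP_pos).ne'
  rw [hquartic, Real.sqrt_div' _ (sq_nonneg _), Real.sqrt_sq (sq_nonneg _),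
    Real.sqrt_mul hP_pos.le]
  field_simp

lemma integral_one_div_sqrt_reciprocal_quartic (hxy₀ : 0 < x * y) (hxy : -1 ∉ [[x, y]]) :
    ∫ s in x..y, 1 / √((s - x) * (y - s) * (s - x⁻¹) * (s - y⁻¹)) =
      √((1 - lpar x ^ 2) * (1 - lpar y ^ 2)) / 2 *
        ∫ u in lpar x..lpar y, 1 / √((u ^ 2 - lpar x ^ 2) * (lpar y ^ 2 - u ^ 2)) := by
  have hne : ∀ s ∈ [[x, y]], s + 1 ≠ 0 := fun s hs h =>
    hxy (eq_neg_of_add_eq_zero_left h ▸ hs)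
  rw [← integral_deriv_smul_comp_lpar _ hxy, ← intervalIntegral.integral_const_mul]
  exact intervalIntegral.integral_congr fun s hs =>
    one_div_sqrt_reciprocal_quartic hxy₀ (hne s hs) (hne x left_mem_uIcc) (hne y right_mem_uIcc)

end Cayley

section Legendre

variable {c κ t a b : ℝ}

lemma one_sub_mul_sq_pos (hc : c ≤ 1) (ht : |t| < 1) : 0 < 1 - c * t ^ 2 :=
  sub_pos.2 (mul_lt_one_of_nonneg_of_lt_one_right hc (sq_nonneg t)
    ((sq_lt_one_iff_abs_lt_one t).2 ht))

lemma hasDerivAt_sqrt_one_sub_mul_sq (ht : 1 - c * t ^ 2 ≠ 0) :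
    HasDerivAt (fun t => √(1 - c * t ^ 2)) (-(c * t / √(1 - c * t ^ 2))) t := by
  refine ((((hasDerivAt_pow 2 t).const_mul c).const_sub 1).sqrt ht).congr_deriv ?_
  simp only [Nat.cast_ofNat, Nat.add_one_sub_one, pow_one]
  ring

lemma deriv_dn_mul_one_div_sqrt (hκ : κ ≠ 0) (hκ₁ : κ ^ 2 ≤ 1) (ht₀ : 0 < t) (ht₁ : t < 1) :
    -(κ ^ 2 * t / √(1 - κ ^ 2 * t ^ 2)) *
        (1 / √((√(1 - κ ^ 2 * t ^ 2) ^ 2 - (1 - κ ^ 2)) * (1 - √(1 - κ ^ 2 * t ^ 2) ^ 2))) =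
      -(1 / √((1 - t ^ 2) * (1 - κ ^ 2 * t ^ 2))) := by
  have hdn : 0 < 1 - κ ^ 2 * t ^ 2 := one_sub_mul_sq_pos hκ₁ (abs_lt.2 ⟨by linarith, ht₁⟩)
  have ht₂ : 0 < 1 - t ^ 2 := sub_pos.2 (pow_lt_one₀ ht₀.le ht₁ two_ne_zero)
  have hradicand : (1 - κ ^ 2 * t ^ 2 - (1 - κ ^ 2)) * (1 - (1 - κ ^ 2 * t ^ 2)) =
      (κ ^ 2 * t) ^ 2 * (1 - t ^ 2) := by ring
  rw [Real.sq_sqrt hdn.le, hradicand, Real.sqrt_mul (sq_nonneg _), Real.sqrt_sq (by positivity),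
    Real.sqrt_mul ht₂.le]
  field_simp

lemma ellK_eq_integral_dn (hκ : κ ≠ 0) (hκ₁ : κ ^ 2 ≤ 1) :
    ellK κ = ∫ v in √(1 - κ ^ 2)..1, 1 / √((v ^ 2 - (1 - κ ^ 2)) * (1 - v ^ 2)) := by
  have hunit {t : ℝ} (ht : t ∈ Ioo (min (0 : ℝ) 1) (max 0 1)) : 0 < t ∧ t < 1 := by simpa using ht
  have hderiv (t : ℝ) (ht : t ∈ Ioo (min (0 : ℝ) 1) (max 0 1)) :
      HasDerivAt (fun t => √(1 - κ ^ 2 * t ^ 2)) (-(κ ^ 2 * t / √(1 - κ ^ 2 * t ^ 2))) t :=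
    hasDerivAt_sqrt_one_sub_mul_sq
      (one_sub_mul_sq_pos hκ₁ (abs_lt.2 ⟨by linarith [(hunit ht).1], (hunit ht).2⟩)).ne'
  have hderiv_nonpos (t : ℝ) (ht : t ∈ Ioo (min (0 : ℝ) 1) (max 0 1)) :
      -(κ ^ 2 * t / √(1 - κ ^ 2 * t ^ 2)) ≤ 0 := by
    have ht₀ : 0 < t := (hunit ht).1
    exact neg_nonpos.2 (by positivity)
  have hsubst := intervalIntegral.integral_deriv_smul_comp_of_deriv_nonpos
    (g := fun v => 1 / √((v ^ 2 - (1 - κ ^ 2)) * (1 - v ^ 2))) (by fun_prop) hderiv hderiv_nonpos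
  simp only [ne_eq, OfNat.ofNat_ne_zero, not_false_eq_true, zero_pow, mul_zero, sub_zero,
    Real.sqrt_one, one_pow, mul_one] at hsubst
  rw [intervalIntegral.integral_symm, ← hsubst, ← intervalIntegral.integral_neg]
  exact intervalIntegral.integral_congr_Ioo_of_le zero_le_one fun t ht =>
    (neg_eq_iff_eq_neg.2 (deriv_dn_mul_one_div_sqrt hκ hκ₁ ht.1 ht.2)).symm

lemma integral_one_div_sqrt_biquadratic_scale (hb : b ≠ 0) :
    ∫ u in a..b, 1 / √((u ^ 2 - a ^ 2) * (b ^ 2 - u ^ 2)) =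
      1 / b * ∫ v in a / b..1, 1 / √((v ^ 2 - (a / b) ^ 2) * (1 - v ^ 2)) := by
  have hscale (u : ℝ) : 1 / √((u ^ 2 - a ^ 2) * (b ^ 2 - u ^ 2)) =
      1 / b ^ 2 * (1 / √(((u / b) ^ 2 - (a / b) ^ 2) * (1 - (u / b) ^ 2))) := by
    have hradicand : (u ^ 2 - a ^ 2) * (b ^ 2 - u ^ 2) =
        (b ^ 2) ^ 2 * (((u / b) ^ 2 - (a / b) ^ 2) * (1 - (u / b) ^ 2)) := by
      field_simp
    rw [hradicand, Real.sqrt_mul (sq_nonneg _), Real.sqrt_sq (sq_nonneg b), one_div_mul_one_div]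
  simp only [hscale]
  rw [intervalIntegral.integral_const_mul,
    intervalIntegral.integral_comp_div
      (fun v => 1 / √((v ^ 2 - (a / b) ^ 2) * (1 - v ^ 2))) hb,
    div_self hb, smul_eq_mul, ← mul_assoc]
  congr 1
  field_simp

lemma integral_one_div_sqrt_biquadratic (ha : 0 < a) (hab : a < b) :
    ∫ u in a..b, 1 / √((u ^ 2 - a ^ 2) * (b ^ 2 - u ^ 2)) =
      1 / b * ellK √(1 - (a / b) ^ 2) := by
  have hb : 0 < b := ha.trans hab
  have hratio : 0 < a / b := div_pos ha hb
  have hk : 0 < 1 - (a / b) ^ 2 :=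
    sub_pos.2 (pow_lt_one₀ hratio.le ((div_lt_one hb).2 hab) two_ne_zero)
  have hκ : √(1 - (a / b) ^ 2) ^ 2 = 1 - (a / b) ^ 2 := Real.sq_sqrt hk.le
  have hκ₁ : √(1 - (a / b) ^ 2) ^ 2 ≤ 1 := hκ.trans_le (sub_le_self 1 (sq_nonneg _))
  rw [integral_one_div_sqrt_biquadratic_scale hb.ne',
    ellK_eq_integral_dn (Real.sqrt_pos.2 hk).ne' hκ₁, hκ, sub_sub_cancel,
    Real.sqrt_sq hratio.le]

end Legendre

theorem stmt14_general {η₁ η₂ : ℝ} (h : η₁ < η₂) (hη : 1 < η₁ ∨ η₂ < -1) :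
    ∫ s in η₁..η₂, 1 / √((s - η₁) * (η₂ - s) * (s - η₁⁻¹) * (s - η₂⁻¹)) =
      √((1 - lpar η₁ ^ 2) * (1 - lpar η₂ ^ 2)) / (2 * lpar η₂) *
        ellK √(1 - (lpar η₁ / lpar η₂) ^ 2) := by
  have hmul : 0 < η₁ * η₂ := by rcases hη with hη | hη <;> nlinarith
  have hside : 0 < (η₁ + 1) * (η₂ + 1) := by rcases hη with hη | hη <;> nlinarith
  have hpole : -1 ∉ [[η₁, η₂]] := by
    rw [uIcc_of_le h.le]
    rintro ⟨h₁, h₂⟩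
    rcases hη with hη | hη <;> linarith
  have hl₁ : 0 < lpar η₁ := lpar_pos_iff.2 (hη.imp_right h.trans)
  rw [integral_one_div_sqrt_reciprocal_quartic hmul hpole,
    integral_one_div_sqrt_biquadratic hl₁ (lpar_lt_lpar hside h)]
  field_simp

/- STATEMENT 14: With 1 < η₁ < η₂, l₁ = (η₁−1)/(η₁+1), l₂ = (η₂−1)/(η₂+1),
k = l₁/l₂, one has
∫_{η₁}^{η₂} ds / √((s − η₁)(η₂ − s)(s − η₁⁻¹)(s − η₂⁻¹))
  = (√((1 − l₁²)(1 − l₂²)) / (2 l₂)) · K(√(1 − k²)). -/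
theorem stmt14 (η₁ η₂ : ℝ) (h1 : 1 < η₁) (h2 : η₁ < η₂) :
    (∫ s in η₁..η₂,
        1 / Real.sqrt ((s - η₁) * (η₂ - s) * (s - η₁⁻¹) * (s - η₂⁻¹))) =
      Real.sqrt ((1 - lpar η₁ ^ 2) * (1 - lpar η₂ ^ 2)) / (2 * lpar η₂) *
        ellK (Real.sqrt (1 - (lpar η₁ / lpar η₂) ^ 2)) :=
  stmt14_general h2 (Or.inl h1)
end

section
/- With the data below, for every α ∈ (η₁, η₂], ∫_{η₁⁻¹}^{η₁} (s² + s⁻²) ds / ρ_α(s) = (2√((1 − l₁²)(1 − l(α)²)) / l(α)) · ∫₀¹ (1 + 8 l₁² x² / (1 − l₁² x²)²) dx / √((1 − x²)(1 − k(α)² x²)). -/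
/-- `ρ_α(s) = √((η₁−s)(s−η₁⁻¹)(α−s)(s−α⁻¹))`. -/
noncomputable def rho (η₁ α s : ℝ) : ℝ :=
  Real.sqrt ((η₁ - s) * (s - η₁⁻¹) * (α - s) * (s - α⁻¹))

/-! The substitution `s = (1 + x) / (1 - x)` sends the branch points `±l(η)` of the elliptic
integrand to `η` and `η⁻¹`, because `x ↦ -x` corresponds to `s ↦ s⁻¹`. Hence `(η - s) (s - η⁻¹)` is
a constant multiple of `(l(η)² - x²) / (1 - x)²`, the Jacobian `2 / (1 - x)²` cancels the
denominators, and the integrand becomes even in `x`. Rescaling by `l₁` then gives Legendre's normal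
form on `[0, 1]`. -/

/-- The Cayley transform `x ↦ (1 + x) / (1 - x)`, which is inverse to `lpar` and is the substitution
that brings the integral to Legendre's form. At `x = 1` it takes the junk value `0`. -/
noncomputable def cayley (x : ℝ) : ℝ := (1 + x) / (1 - x)

section Cayley

variable {a b x : ℝ}

lemma lpar_cayley (hx : x ≠ 1) : lpar (cayley x) = x := by
  have : 1 - x ≠ 0 := sub_ne_zero.2 hx.symm
  unfold lpar cayley
  field_simp
  ring

lemma cayley_lpar (hx : x ≠ -1) : cayley (lpar x) = x := by
  have : x + 1 ≠ 0 := fun h ↦ hx (eq_neg_of_add_eq_zero_left h)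
  unfold lpar cayley
  field_simp
  ring

lemma lpar_mem_Ioo (hx : 1 < x) : lpar x ∈ Set.Ioo 0 1 :=
  ⟨div_pos (by linarith) (by linarith), (div_lt_one (by linarith)).2 (by linarith)⟩

lemma inv_cayley (x : ℝ) : (cayley x)⁻¹ = cayley (-x) := by
  rw [cayley, cayley, inv_div, sub_neg_eq_add, ← sub_eq_add_neg]

lemma hasDerivAt_cayley (hx : x ≠ 1) : HasDerivAt cayley (2 / (1 - x) ^ 2) x := by
  have hnum : HasDerivAt (fun y : ℝ ↦ 1 + y) 1 x := (hasDerivAt_id x).const_add 1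
  have hden : HasDerivAt (fun y : ℝ ↦ 1 - y) (-1) x := (hasDerivAt_id x).const_sub 1
  exact (hnum.fun_div hden (sub_ne_zero.2 hx.symm)).congr_deriv (by ring)

lemma cayley_sub_mul_sub_inv_cayley (ha : a ^ 2 ≠ 1) (hx : x ≠ 1) :
    (cayley a - cayley x) * (cayley x - (cayley a)⁻¹) =
      4 / (1 - x) ^ 2 * ((a ^ 2 - x ^ 2) / (1 - a ^ 2)) := by
  have hfactor : 1 - a ^ 2 = (1 - a) * (1 + a) := by ring
  obtain ⟨ha_sub, ha_add⟩ := mul_ne_zero_iff.1 (hfactor ▸ sub_ne_zero.2 ha.symm)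
  have hx_sub : 1 - x ≠ 0 := sub_ne_zero.2 hx.symm
  rw [inv_cayley, hfactor]
  unfold cayley
  rw [sub_neg_eq_add]
  field_simp
  ring

lemma rho_cayley (ha : |a| < 1) (hb : |b| < 1) (hx : x ≠ 1) :
    rho (cayley a) (cayley b) (cayley x) =
      4 / (1 - x) ^ 2 * (√((a ^ 2 - x ^ 2) * (b ^ 2 - x ^ 2)) / √((1 - a ^ 2) * (1 - b ^ 2))) := by
  have ha' : a ^ 2 < 1 := (sq_lt_one_iff_abs_lt_one a).2 ha
  have hb' : b ^ 2 < 1 := (sq_lt_one_iff_abs_lt_one b).2 hb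
  have hden : 0 ≤ (1 - a ^ 2) * (1 - b ^ 2) := mul_nonneg (by linarith) (by linarith)
  have hprod : (cayley a - cayley x) * (cayley x - (cayley a)⁻¹) *
      (cayley b - cayley x) * (cayley x - (cayley b)⁻¹) =
        (4 / (1 - x) ^ 2) ^ 2 *
          ((a ^ 2 - x ^ 2) * (b ^ 2 - x ^ 2) / ((1 - a ^ 2) * (1 - b ^ 2))) := by
    rw [mul_assoc, cayley_sub_mul_sub_inv_cayley ha'.ne hx,
      cayley_sub_mul_sub_inv_cayley hb'.ne hx, mul_div_mul_comm]
    ring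
  rw [rho, hprod, Real.sqrt_mul (sq_nonneg _), Real.sqrt_sq (by positivity), Real.sqrt_div' _ hden]

lemma cayley_sq_add_inv_sq (hx : x ^ 2 ≠ 1) :
    cayley x ^ 2 + (cayley x)⁻¹ ^ 2 = 2 * (1 + 8 * x ^ 2 / (1 - x ^ 2) ^ 2) := by
  have hfactor : 1 - x ^ 2 = (1 - x) * (1 + x) := by ring
  obtain ⟨hx_sub, hx_add⟩ := mul_ne_zero_iff.1 (hfactor ▸ sub_ne_zero.2 hx.symm)
  rw [cayley, inv_div, hfactor]
  field_simp
  ring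

end Cayley

section Substitution

open intervalIntegral

variable {E : Type*} [NormedAddCommGroup E] [NormedSpace ℝ E]

lemma integral_cayley {x y : ℝ} (hx : x < 1) (hy : y < 1) (f : ℝ → E) :
    ∫ s in cayley x..cayley y, f s = ∫ t in x..y, (2 / (1 - t) ^ 2) • f (cayley t) := by
  have hderiv : ∀ t ≤ max x y, HasDerivAt cayley (2 / (1 - t) ^ 2) t :=
    fun t ht ↦ hasDerivAt_cayley (ht.trans_lt (max_lt hx hy)).ne
  exact (integral_deriv_smul_comp_of_deriv_nonneg
    (fun t ht ↦ (hderiv t ht.2).continuousAt.continuousWithinAt)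
    (fun t ht ↦ hderiv t ht.2.le) (fun t _ ↦ by positivity)).symm

lemma integral_div_rho_cayley {a b : ℝ} (ha : |a| < 1) (hb : |b| < 1) (f : ℝ → ℝ) :
    ∫ s in (cayley a)⁻¹..cayley a, f s / rho (cayley a) (cayley b) s =
      √((1 - a ^ 2) * (1 - b ^ 2)) / 2 *
        ∫ x in -a..a, f (cayley x) / √((a ^ 2 - x ^ 2) * (b ^ 2 - x ^ 2)) := by
  obtain ⟨ha₁, ha₂⟩ := abs_lt.1 ha
  rw [inv_cayley, integral_cayley (by linarith) ha₂, ← integral_const_mul]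
  refine integral_congr fun x hx ↦ ?_
  have hx₁ : x < 1 := hx.2.trans_lt (max_lt (by linarith) ha₂)
  have hx_sub : 1 - x ≠ 0 := by linarith
  simp only [rho_cayley ha hb hx₁.ne, smul_eq_mul]
  field_simp
  ring

lemma integral_div_sqrt_rescale {a b : ℝ} (ha : 0 < a) (hb : 0 < b) (f : ℝ → ℝ) :
    ∫ x in -a..a, f x / √((a ^ 2 - x ^ 2) * (b ^ 2 - x ^ 2)) =
      b⁻¹ * ∫ y in (-1)..1, f (a * y) / √((1 - y ^ 2) * (1 - (a / b) ^ 2 * y ^ 2)) := by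
  have hsqrt (y : ℝ) : √((a ^ 2 - (a * y) ^ 2) * (b ^ 2 - (a * y) ^ 2)) =
      a * b * √((1 - y ^ 2) * (1 - (a / b) ^ 2 * y ^ 2)) := by
    rw [← Real.sqrt_sq (mul_pos ha hb).le, ← Real.sqrt_mul (sq_nonneg _)]
    congr 1
    field_simp
  have hscale := smul_integral_comp_mul_left (a := -1) (b := 1)
    (fun x ↦ f x / √((a ^ 2 - x ^ 2) * (b ^ 2 - x ^ 2))) a
  rw [mul_neg_one, mul_one] at hscale
  rw [← hscale, smul_eq_mul, ← integral_const_mul, ← integral_const_mul]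
  refine integral_congr fun y _ ↦ ?_
  simp only [hsqrt]
  field_simp

lemma integral_neg_self_of_even {f : ℝ → E} (hf : Function.Even f) (a : ℝ) :
    ∫ x in -a..a, f x = (2 : ℝ) • ∫ x in 0..a, f x := by
  by_cases hfi : IntervalIntegrable f MeasureTheory.volume 0 a
  · have hfi' : IntervalIntegrable f MeasureTheory.volume (-a) 0 := by
      simpa only [neg_zero, hf _] using ((IntervalIntegrable.iff_comp_neg).1 hfi).symm
    have hneg : ∫ x in -a..0, f x = ∫ x in 0..a, f x := by
      simpa only [neg_zero, hf _] using (integral_comp_neg (a := 0) (b := a) f).symm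
    rw [← integral_add_adjacent_intervals hfi' hfi, hneg, two_smul]
  · have hsub : Set.uIcc 0 a ⊆ Set.uIcc (-a) a :=
      Set.uIcc_subset_uIcc_right (by simp [Set.mem_uIcc, le_total])
    rw [integral_undef hfi, integral_undef fun h ↦ hfi (h.mono_set hsub), smul_zero]

lemma integral_div_rho_cayley_of_inv_invariant {a b : ℝ} (ha : a ∈ Set.Ioo 0 1)
    (hb : b ∈ Set.Ioo 0 1) {f : ℝ → ℝ} (hf : ∀ s, f s⁻¹ = f s) :
    ∫ s in (cayley a)⁻¹..cayley a, f s / rho (cayley a) (cayley b) s =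
      √((1 - a ^ 2) * (1 - b ^ 2)) / b *
        ∫ y in 0..1, f (cayley (a * y)) / √((1 - y ^ 2) * (1 - (a / b) ^ 2 * y ^ 2)) := by
  have heven : Function.Even fun y ↦
      f (cayley (a * y)) / √((1 - y ^ 2) * (1 - (a / b) ^ 2 * y ^ 2)) := fun y ↦ by
    simp only [mul_neg, ← inv_cayley, hf, neg_sq]
  rw [integral_div_rho_cayley (abs_lt.2 ⟨by linarith [ha.1], ha.2⟩)
      (abs_lt.2 ⟨by linarith [hb.1], hb.2⟩),
    integral_div_sqrt_rescale ha.1 hb.1 (fun x ↦ f (cayley x)), integral_neg_self_of_even heven,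
    smul_eq_mul]
  ring

end Substitution

/- STATEMENT 15: Fix 1 < η₁ < η₂ and l₁ := (η₁−1)/(η₁+1).  For every
α ∈ (η₁, η₂], with l(α) := (α−1)/(α+1) and k(α) := l₁/l(α),
∫_{η₁⁻¹}^{η₁} (s² + s⁻²)/ρ_α(s) ds
 = (2√((1 − l₁²)(1 − l(α)²)) / l(α)) ·
   ∫₀¹ (1 + 8 l₁² x² / (1 − l₁² x²)²) / √((1 − x²)(1 − k(α)² x²)) dx. -/
theorem stmt15 (η₁ η₂ : ℝ) (h1 : 1 < η₁) (h2 : η₁ < η₂) :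
    ∀ α ∈ Set.Ioc η₁ η₂,
      (∫ s in η₁⁻¹..η₁, (s ^ 2 + (s⁻¹) ^ 2) / rho η₁ α s) =
        2 * Real.sqrt ((1 - lpar η₁ ^ 2) * (1 - lpar α ^ 2)) / lpar α *
          ∫ x in (0 : ℝ)..1,
            (1 + 8 * lpar η₁ ^ 2 * x ^ 2 / (1 - lpar η₁ ^ 2 * x ^ 2) ^ 2) /
              Real.sqrt ((1 - x ^ 2) * (1 - (lpar η₁ / lpar α) ^ 2 * x ^ 2)) := by
  intro α ⟨hα, _⟩
  obtain ⟨a, ha, rfl⟩ : ∃ a ∈ Set.Ioo 0 1, cayley a = η₁ :=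
    ⟨lpar η₁, lpar_mem_Ioo h1, cayley_lpar (by linarith)⟩
  obtain ⟨b, hb, rfl⟩ : ∃ b ∈ Set.Ioo 0 1, cayley b = α :=
    ⟨lpar α, lpar_mem_Ioo (h1.trans hα), cayley_lpar (by linarith)⟩
  have hay (y : ℝ) (hy : y ∈ Set.uIcc 0 1) : (a * y) ^ 2 < 1 := by
    rw [Set.uIcc_of_le zero_le_one] at hy
    exact pow_lt_one₀ (mul_nonneg ha.1.le hy.1)
      ((mul_le_of_le_one_right ha.1.le hy.2).trans_lt ha.2) two_ne_zero
  rw [lpar_cayley ha.2.ne, lpar_cayley hb.2.ne,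
    integral_div_rho_cayley_of_inv_invariant ha hb fun s ↦ by rw [inv_inv, add_comm],
    ← intervalIntegral.integral_const_mul, ← intervalIntegral.integral_const_mul]
  refine intervalIntegral.integral_congr fun y hy ↦ ?_
  simp only [cayley_sq_add_inv_sq (hay y hy).ne, mul_pow]
  ring
end
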